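/- Let B ⊂ A be an inclusion of C*-algebras and let M be a finitely generated Hilbert B-bimodule in A with finite set of generators {ψ_l}. Then the map σ_M(a) := Σ_l ψ_l a ψ_l*, defined for a in the relative commutant B' ∩ A, does not depend on the choice of the generators and defines a *-endomorphism of the C*-algebra B' ∩ A. Moreover, if A is unital then σ_M(1) = P_M, and if B is contained in the centre of A then σ_M is an endomorphism of all of A. -/

import Mathlib

/-!
STATEMENT 1: Let `B ⊂ A` be an inclusion of C*-algebras and `M` a finitely generated
Hilbert `B`-bimodule in `A` with generators `{ψ_l}`. Then `σ_M(a) := Σ_l ψ_l a ψ_l*`,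
defined for `a` in the relative commutant `B' ∩ A`, does not depend on the choice of
the generators and defines a *-endomorphism of the C*-algebra `B' ∩ A`. Moreover, if
`A` is unital then `σ_M(1) = P_M`, and if `B` is contained in the centre of `A` then
`σ_M` is an endomorphism of all of `A`.
-/

open scoped BigOperators

/-- A Hilbert `B`-bimodule in a C*-algebra `A` (where `B` is a C*-subalgebra of `A`):
a norm-closed subspace `M ⊆ A` such that `B·M ⊆ M`, `M·B ⊆ M` and `M*·M ⊆ B`. -/
structure HilbertBimoduleIn (A : Type*) [NonUnitalCStarAlgebra A]
    (B : NonUnitalStarSubalgebra ℂ A) : Type _ where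
  carrier : Submodule ℂ A
  isClosed : IsClosed (carrier : Set A)
  left_mul_mem : ∀ b ∈ B, ∀ m ∈ carrier, b * m ∈ carrier
  right_mul_mem : ∀ m ∈ carrier, ∀ b ∈ B, m * b ∈ carrier
  inner_mem : ∀ m ∈ carrier, ∀ m' ∈ carrier, star m * m' ∈ B

/-- A finite family `ψ : ι → A` is a generating family for the Hilbert bimodule `M` in `A`
if every `ψ_i` lies in `M` and every `m ∈ M` satisfies `m = Σ_i ψ_i ψ_i* m`. -/
def HilbertBimoduleIn.IsGeneratingFamily {A : Type*} [NonUnitalCStarAlgebra A]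
    {B : NonUnitalStarSubalgebra ℂ A} (M : HilbertBimoduleIn A B)
    {ι : Type*} [Fintype ι] (ψ : ι → A) : Prop :=
  (∀ i, ψ i ∈ M.carrier) ∧ ∀ m ∈ M.carrier, m = ∑ i, ψ i * star (ψ i) * m

/-- The inner endomorphism `σ_M(a) = Σ_l ψ_l a ψ_l*` associated to a finite family
`ψ` of elements of `A`. -/
def innerEndo {A : Type*} [NonUnitalCStarAlgebra A] {ι : Type*} [Fintype ι]
    (ψ : ι → A) (a : A) : A :=
  ∑ i, ψ i * a * star (ψ i)

/-!
Write `P = ∑ ψ_l ψ_l*`. The elements `ψ_l* m` lie in `B`, so an `a` commuting with `B` can be moved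
through them: `σ(a) m = ∑ ψ_l a ψ_l* m = ∑ ψ_l ψ_l* m a = m a` for every `m ∈ M`. Moreover
`σ(a) P = σ(a)`, since `m* P = (P m)* = m*` on `M`. These two properties determine `σ(a)`, because
`x = x P = ∑ x ψ_l ψ_l*` depends only on the products `x ψ_l`. The element obtained from another
generating family has both properties, so it is the same. Multiplicativity is
`∑ ψ_l a b ψ_l* = ∑ σ(a) ψ_l b ψ_l*`, and for `b ∈ B` both `b σ(a)` and `σ(a) b` equal `σ(a) b P`.
-/

/-- The support `P_M = Σ_l ψ_l ψ_l*`, written for an arbitrary finite family `ψ` so that it can be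
used before its independence of the generators is known. -/
def innerSupport {A : Type*} [NonUnitalCStarAlgebra A] {ι : Type*} [Fintype ι] (ψ : ι → A) : A :=
  ∑ i, ψ i * star (ψ i)

section Family

variable {A : Type*} [NonUnitalCStarAlgebra A] {ι : Type*} [Fintype ι]

theorem mul_innerSupport_eq_sum (x : A) (ψ : ι → A) :
    x * innerSupport ψ = ∑ i, x * ψ i * star (ψ i) := by
  simp only [innerSupport, Finset.mul_sum, mul_assoc]

theorem mul_innerEndo_eq_sum (x : A) (ψ : ι → A) (a : A) :
    x * innerEndo ψ a = ∑ i, x * ψ i * a * star (ψ i) := by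
  simp only [innerEndo, Finset.mul_sum, mul_assoc]

theorem innerEndo_mul_eq_sum (ψ : ι → A) (a x : A) :
    innerEndo ψ a * x = ∑ i, ψ i * a * (star (ψ i) * x) := by
  simp only [innerEndo, Finset.sum_mul, mul_assoc]

theorem isSelfAdjoint_innerSupport (ψ : ι → A) : IsSelfAdjoint (innerSupport ψ) := by
  simp only [IsSelfAdjoint, innerSupport, star_sum, star_mul, star_star]

theorem innerEndo_star (ψ : ι → A) (a : A) : innerEndo ψ (star a) = star (innerEndo ψ a) := by
  simp only [innerEndo, star_sum, star_mul, star_star, mul_assoc]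

theorem innerEndo_eq_innerSupport {ψ : ι → A} {e : A} (he : ∀ i, ψ i * e = ψ i) :
    innerEndo ψ e = innerSupport ψ := by
  simp only [innerEndo, innerSupport, he]

theorem eq_innerEndo {ψ : ι → A} {a x : A} (hx : ∀ i, x * ψ i = ψ i * a)
    (hxP : x * innerSupport ψ = x) : x = innerEndo ψ a := by
  rw [← hxP, mul_innerSupport_eq_sum, innerEndo]
  simp only [hx]

end Family

namespace HilbertBimoduleIn.IsGeneratingFamily

variable {A : Type*} [NonUnitalCStarAlgebra A] {B : NonUnitalStarSubalgebra ℂ A}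
  {M : HilbertBimoduleIn A B} {ι κ : Type*} [Fintype ι] [Fintype κ] {ψ : ι → A} {φ : κ → A}
  {a b m : A}

theorem innerSupport_mul (hψ : M.IsGeneratingFamily ψ) (hm : m ∈ M.carrier) :
    innerSupport ψ * m = m := by
  rw [innerSupport, Finset.sum_mul, ← hψ.2 m hm]

theorem star_mul_innerSupport (hψ : M.IsGeneratingFamily ψ) (hm : m ∈ M.carrier) :
    star m * innerSupport ψ = star m := by
  rw [← (isSelfAdjoint_innerSupport ψ).star_eq, ← star_mul, hψ.innerSupport_mul hm]

theorem innerEndo_mul_innerSupport (hψ : M.IsGeneratingFamily ψ) (hφ : ∀ j, φ j ∈ M.carrier)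
    (a : A) : innerEndo φ a * innerSupport ψ = innerEndo φ a := by
  rw [innerEndo_mul_eq_sum, innerEndo]
  simp only [hψ.star_mul_innerSupport (hφ _)]

theorem innerEndo_mul_eq_mul (hψ : M.IsGeneratingFamily ψ)
    (ha : a ∈ Set.centralizer (B : Set A)) (hm : m ∈ M.carrier) :
    innerEndo ψ a * m = m * a := by
  have commutes (i : ι) : star (ψ i) * m * a = a * (star (ψ i) * m) :=
    ha _ (M.inner_mem _ (hψ.1 i) _ hm)
  calc innerEndo ψ a * m
      = ∑ i, ψ i * (a * (star (ψ i) * m)) := by simp only [innerEndo_mul_eq_sum, mul_assoc]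
    _ = ∑ i, ψ i * (star (ψ i) * m * a) := by simp only [commutes]
    _ = innerSupport ψ * m * a := by simp only [innerSupport, Finset.sum_mul, mul_assoc]
    _ = m * a := by rw [hψ.innerSupport_mul hm]

theorem innerEndo_congr (hψ : M.IsGeneratingFamily ψ) (hφ : M.IsGeneratingFamily φ)
    (ha : a ∈ Set.centralizer (B : Set A)) : innerEndo ψ a = innerEndo φ a :=
  eq_innerEndo (fun j => hψ.innerEndo_mul_eq_mul ha (hφ.1 j))
    (hφ.innerEndo_mul_innerSupport hψ.1 a)

theorem innerEndo_mul (hψ : M.IsGeneratingFamily ψ) (ha : a ∈ Set.centralizer (B : Set A)) (b : A) :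
    innerEndo ψ (a * b) = innerEndo ψ a * innerEndo ψ b := by
  rw [mul_innerEndo_eq_sum, innerEndo]
  simp only [hψ.innerEndo_mul_eq_mul ha (hψ.1 _), mul_assoc]

theorem star_mul_mul_innerSupport (hψ : M.IsGeneratingFamily ψ) (hm : m ∈ M.carrier)
    (hb : b ∈ B) : star m * (b * innerSupport ψ) = star m * b := by
  simpa only [star_mul, star_star, mul_assoc] using
    hψ.star_mul_innerSupport (M.left_mul_mem _ (star_mem hb) _ hm)

theorem innerEndo_mul_mul_innerSupport (hψ : M.IsGeneratingFamily ψ)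
    (hφ : ∀ j, φ j ∈ M.carrier) (hb : b ∈ B) (a : A) :
    innerEndo φ a * (b * innerSupport ψ) = innerEndo φ a * b := by
  simp only [innerEndo_mul_eq_sum, hψ.star_mul_mul_innerSupport (hφ _) hb]

theorem innerEndo_mem_centralizer (hψ : M.IsGeneratingFamily ψ)
    (ha : a ∈ Set.centralizer (B : Set A)) : innerEndo ψ a ∈ Set.centralizer (B : Set A) := by
  intro b hb
  have intertwines (i : ι) : innerEndo ψ a * b * ψ i = b * ψ i * a := by
    rw [mul_assoc, hψ.innerEndo_mul_eq_mul ha (M.left_mul_mem b hb _ (hψ.1 i))]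
  calc b * innerEndo ψ a
      = ∑ i, b * ψ i * a * star (ψ i) := mul_innerEndo_eq_sum b ψ a
    _ = ∑ i, innerEndo ψ a * b * ψ i * star (ψ i) := by simp only [intertwines]
    _ = innerEndo ψ a * (b * innerSupport ψ) := by rw [← mul_innerSupport_eq_sum, mul_assoc]
    _ = innerEndo ψ a * b := hψ.innerEndo_mul_mul_innerSupport hψ.1 hb a

end HilbertBimoduleIn.IsGeneratingFamily

theorem innerEndo_of_fin_gen_hilbert_bimodule_in_general
    {A : Type*} [NonUnitalCStarAlgebra A] {B : NonUnitalStarSubalgebra ℂ A}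
    {M : HilbertBimoduleIn A B} {ι κ : Type*} [Fintype ι] [Fintype κ] {ψ : ι → A} {φ : κ → A}
    (hψ : M.IsGeneratingFamily ψ) (hφ : M.IsGeneratingFamily φ) :
    (∀ a ∈ Set.centralizer (B : Set A), innerEndo ψ a = innerEndo φ a) ∧
    (∀ a ∈ Set.centralizer (B : Set A), innerEndo ψ a ∈ Set.centralizer (B : Set A)) ∧
    (∀ a ∈ Set.centralizer (B : Set A), ∀ b : A,
      innerEndo ψ (a * b) = innerEndo ψ a * innerEndo ψ b) ∧
    (∀ a : A, innerEndo ψ (star a) = star (innerEndo ψ a)) ∧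
    (∀ e : A, (∀ x : A, x * e = x) → innerEndo ψ e = ∑ i, ψ i * star (ψ i)) ∧
    ((B : Set A) ⊆ Set.center A →
      (∀ a b : A, innerEndo ψ (a * b) = innerEndo ψ a * innerEndo ψ b) ∧
      (∀ a : A, innerEndo ψ a = innerEndo φ a)) := by
  refine ⟨fun a => hψ.innerEndo_congr hφ, fun a => hψ.innerEndo_mem_centralizer,
    fun a => hψ.innerEndo_mul, innerEndo_star ψ,
    fun e he => innerEndo_eq_innerSupport fun i => he (ψ i), fun hcenter => ?_⟩
  have mem_centralizer (a : A) : a ∈ Set.centralizer (B : Set A) :=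
    Set.centralizer_eq_top_iff_subset.2 hcenter ▸ Set.mem_univ a
  exact ⟨fun a => hψ.innerEndo_mul (mem_centralizer a),
    fun a => hψ.innerEndo_congr hφ (mem_centralizer a)⟩

/-- `σ_M` does not depend on the choice of generators (on the relative commutant
`B' ∩ A`), it is a *-endomorphism of `B' ∩ A`; if `A` is unital then `σ_M 1 = P_M`;
and if `B ⊆ Z(A)` then `σ_M` is multiplicative and star-preserving on all of `A`,
i.e. an endomorphism of `A`. (Here `A` is taken unital so that the clause
`σ_M(1) = P_M` makes sense; ℂ-linearity of `σ_M` holds by construction.) -/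
theorem innerEndo_of_fin_gen_hilbert_bimodule_in
    {A : Type*} [CStarAlgebra A] (B : NonUnitalStarSubalgebra ℂ A)
    (hB : IsClosed (B : Set A)) (M : HilbertBimoduleIn A B)
    {ι κ : Type*} [Fintype ι] [Fintype κ] (ψ : ι → A) (φ : κ → A)
    (hψ : M.IsGeneratingFamily ψ) (hφ : M.IsGeneratingFamily φ) :
    -- independence of the choice of generators on `B' ∩ A`
    (∀ a ∈ Set.centralizer (B : Set A), innerEndo ψ a = innerEndo φ a) ∧
    -- `σ_M` maps `B' ∩ A` into itself
    (∀ a ∈ Set.centralizer (B : Set A), innerEndo ψ a ∈ Set.centralizer (B : Set A)) ∧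
    -- `σ_M` is a *-homomorphism on `B' ∩ A`
    (∀ a ∈ Set.centralizer (B : Set A), ∀ b ∈ Set.centralizer (B : Set A),
      innerEndo ψ (a * b) = innerEndo ψ a * innerEndo ψ b) ∧
    (∀ a ∈ Set.centralizer (B : Set A), innerEndo ψ (star a) = star (innerEndo ψ a)) ∧
    -- `σ_M(1)` is the support `P_M`
    innerEndo ψ (1 : A) = ∑ i, ψ i * star (ψ i) ∧
    -- if `B` is contained in the centre of `A`, `σ_M` is an endomorphism of `A`
    ((B : Set A) ⊆ Set.center A →
      (∀ a b : A, innerEndo ψ (a * b) = innerEndo ψ a * innerEndo ψ b) ∧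
      (∀ a : A, innerEndo ψ (star a) = star (innerEndo ψ a)) ∧
      (∀ a : A, innerEndo ψ a = innerEndo φ a)) := by
  obtain ⟨hindep, hmem, hmul, hstar, hone, hcenter⟩ :=
    innerEndo_of_fin_gen_hilbert_bimodule_in_general hψ hφ
  exact ⟨hindep, hmem, fun a ha b _ => hmul a ha b, fun a _ => hstar a, hone 1 mul_one,
    fun h => ⟨(hcenter h).1, hstar, (hcenter h).2⟩⟩
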